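/- Let p₁ and p₂ be ℚ⁺-exponent-strings in contraction form with exponents having common denominator C (so multiplying every exponent by C yields strings w₁, w₂ over Σ). Then the exp-edit distance satisfies dist(p₁, p₂) = d/C, where d is the classical string edit distance from w₁ to w₂. -/

import Mathlib

/-!
Cheap direction: a string edit sequence from `w₁` to `w₂` is an exp-edit sequence on the run-length
encodings, and exp-edit sequences may be rescaled (`EditCost.scale`), so `dist ≤ d / C`.

For the converse, rescale so that the starting point is the encoding of `w = w₁`. The set of costs of
continuous alignments of (a segment of) `w` with an exponent-string `v` is described by a relation
`Align w v x y c`: an alignment path consuming `v` moves from position `x` to position `y` of `w` at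
cost at most `c`. Alignments compose under concatenation, and `Path.split` makes the single-letter
relation additive in the exponent, so `Align` does not see the merging of boundary terms
(`align_rcat`). The triangle inequalities then show that an edit operation of cost `c'` turns an
alignment of cost `c` into one of cost `c + c'` (`Align.step`). Hence any exp-edit sequence of cost
`c` from `w₁` to `w₂` gives a continuous alignment of cost at most `c`.

A continuous alignment is a monotone path from `(0,0)` to `(|w₁|,|w₂|)` made of horizontal,
vertical and diagonal segments, and its cost is bounded below by a potential. On the integer points let
`D(i,j)` be the string edit distance of the prefixes of lengths `i` and `j`, and extend `D` to the
plane, linearly on each of the two triangles into which the main diagonal cuts a unit cell (`interp`).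
On a triangle the slopes in the three directions are the increments `D(i+1,·) - D(i,·)`,
`D(·,j+1) - D(·,j)` and `D(i+1,j+1) - D(i,j)`, which are at most the deletion, insertion and
substitution costs of the cell. So the potential grows along a path by at most its cost
(`Path.interp_le`), and `d = D(|w₁|,|w₂|)` is at most the cost of any alignment.
-/

namespace ExpStr

variable {α S : Type*}

/-- Concatenation of exponent-string representations, merging the boundary
terms when the base characters coincide. -/
def eCat [DecidableEq α] (op : S → S → S) (p q : List (α × S)) : List (α × S) :=
  match p.getLast?, q with
  | some (a, s), (b, t) :: q' =>
      if a = b then p.dropLast ++ (a, op s t) :: q' else p ++ q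
  | _, _ => p ++ q

/-- The defining property of an `S`-exponent-string:
consecutive base characters differ. -/
def IsExp (l : List (α × S)) : Prop := l.Chain' (fun x y => x.1 ≠ y.1)

/-- The exponent-string corresponding to a representation. -/
def eRep [DecidableEq α] (op : S → S → S) : List (α × S) → List (α × S)
  | [] => []
  | x :: xs => eCat op [x] (eRep op xs)

end ExpStr

noncomputable section
namespace ExpStr
open MeasureTheory

variable {α : Type*}

/-- Length of an `ℝ⁺`-exponent-string: the sum of its exponents. -/
def eLen (l : List (α × ℝ)) : ℝ := (l.map Prod.snd).sum

/-- `ℝ⁺`-exponent-strings: consecutive base characters differ and all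
exponents are positive reals. -/
def RES (l : List (α × ℝ)) : Prop := IsExp l ∧ ∀ x ∈ l, 0 < x.2

/-- Concatenation of `ℝ⁺`-exponent-strings (exponents added at the boundary). -/
def rcat [DecidableEq α] (p q : List (α × ℝ)) : List (α × ℝ) :=
  eCat (· + ·) p q

/-- The `ℕ`-exponent-string (run-length encoding) corresponding to a word. -/
def ofWord [DecidableEq α] (w : List α) : List (α × ℝ) :=
  eRep (· + ·) (w.map fun a => (a, (1 : ℝ)))

/-- Multiply every exponent by `k`. -/
def scaleE (k : ℝ) (l : List (α × ℝ)) : List (α × ℝ) :=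
  l.map fun x => (x.1, k * x.2)

/-- The base character of the position `x` in an `ℝ⁺`-exponent-string. -/
def charAt [Inhabited α] : List (α × ℝ) → ℝ → α
  | [], _ => default
  | (a, s) :: t, x => if x < s then a else charAt t (x - s)

/-- A single exp-edit operation applied to an infix, with its cost:
insertion `λ → a^q`, deletion `a^q → λ`, or substitution `a^q → b^q`. -/
def Step [DecidableEq α] (wdel wins : α → ℝ) (wsub : α → α → ℝ)
    (u v : List (α × ℝ)) (c : ℝ) : Prop :=
  ∃ p₁ p₂ : List (α × ℝ), RES p₁ ∧ RES p₂ ∧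
    ((∃ a q, 0 < q ∧ u = rcat p₁ p₂ ∧ v = rcat p₁ (rcat [(a, q)] p₂) ∧
        c = q * wins a) ∨
     (∃ a q, 0 < q ∧ u = rcat p₁ (rcat [(a, q)] p₂) ∧ v = rcat p₁ p₂ ∧
        c = q * wdel a) ∨
     (∃ a b q, 0 < q ∧ u = rcat p₁ (rcat [(a, q)] p₂) ∧
        v = rcat p₁ (rcat [(b, q)] p₂) ∧ c = q * wsub a b))

/-- `EditCost wdel wins wsub u v c` holds iff there is a finite exp-edit
sequence from `u` to `v` of total cost `c`. -/
inductive EditCost [DecidableEq α] (wdel wins : α → ℝ) (wsub : α → α → ℝ)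
    (u : List (α × ℝ)) : List (α × ℝ) → ℝ → Prop
  | refl : EditCost wdel wins wsub u u 0
  | step {p q : List (α × ℝ)} {c c' : ℝ} :
      EditCost wdel wins wsub u p c → Step wdel wins wsub p q c' →
      EditCost wdel wins wsub u q (c + c')

/-- Exp-edit distance: the infimum cost of exp-edit sequences. -/
def eDist [DecidableEq α] (wdel wins : α → ℝ) (wsub : α → α → ℝ)
    (u v : List (α × ℝ)) : ℝ :=
  sInf {c | EditCost wdel wins wsub u v c}

/-- Exp-edit sequences all of whose intermediate terms satisfy `P`. -/
inductive EditCostIn [DecidableEq α] (P : List (α × ℝ) → Prop)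
    (wdel wins : α → ℝ) (wsub : α → α → ℝ)
    (u : List (α × ℝ)) : List (α × ℝ) → ℝ → Prop
  | refl : EditCostIn P wdel wins wsub u u 0
  | step {p q : List (α × ℝ)} {c c' : ℝ} :
      EditCostIn P wdel wins wsub u p c → Step wdel wins wsub p q c' → P q →
      EditCostIn P wdel wins wsub u q (c + c')

/-- All exponents are positive integers. -/
def IntExp (l : List (α × ℝ)) : Prop := ∀ x ∈ l, ∃ n : ℕ, x.2 = n

/-- All exponents are (positive) rationals. -/
def RatExp (l : List (α × ℝ)) : Prop := ∀ x ∈ l, ∃ r : ℚ, x.2 = r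

/-- A single classical string edit operation with its cost. -/
def SStep (wdel wins : α → ℝ) (wsub : α → α → ℝ) (u v : List α) (c : ℝ) : Prop :=
  ∃ p₁ p₂ : List α,
    ((∃ a, u = p₁ ++ p₂ ∧ v = p₁ ++ a :: p₂ ∧ c = wins a) ∨
     (∃ a, u = p₁ ++ a :: p₂ ∧ v = p₁ ++ p₂ ∧ c = wdel a) ∨
     (∃ a b, u = p₁ ++ a :: p₂ ∧ v = p₁ ++ b :: p₂ ∧ c = wsub a b))

/-- Total costs of classical string edit sequences. -/
inductive SEditCost (wdel wins : α → ℝ) (wsub : α → α → ℝ) (u : List α) :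
    List α → ℝ → Prop
  | refl : SEditCost wdel wins wsub u u 0
  | step {p q : List α} {c c' : ℝ} :
      SEditCost wdel wins wsub u p c → SStep wdel wins wsub p q c' →
      SEditCost wdel wins wsub u q (c + c')

/-- Classical string edit distance. -/
def sDist (wdel wins : α → ℝ) (wsub : α → α → ℝ) (u v : List α) : ℝ :=
  sInf {c | SEditCost wdel wins wsub u v c}

/-- X-projection of a diagonal segment `(x₀, y₀, t)`. -/
def mSegX (m : ℝ × ℝ × ℝ) : Set ℝ := Set.Ico m.1 (m.1 + m.2.2)

/-- Y-projection of a diagonal segment `(x₀, y₀, t)`. -/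
def mSegY (m : ℝ × ℝ × ℝ) : Set ℝ := Set.Ico m.2.1 (m.2.1 + m.2.2)

/-- X-projection of a matching. -/
def mEX (M : List (ℝ × ℝ × ℝ)) : Set ℝ := ⋃ m ∈ M, mSegX m

/-- Y-projection of a matching. -/
def mEY (M : List (ℝ × ℝ × ℝ)) : Set ℝ := ⋃ m ∈ M, mSegY m

/-- An exp-matching: a finite family of diagonal segments, each given as
`(x₀, y₀, t)` (start point and length parameter), lying in `[0,L₁)×[0,L₂)`,
with pairwise disjoint axis projections, and monotone. -/
def IsMatching (L₁ L₂ : ℝ) (M : List (ℝ × ℝ × ℝ)) : Prop :=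
  (∀ m ∈ M, 0 < m.2.2 ∧ 0 ≤ m.1 ∧ 0 ≤ m.2.1 ∧
      m.1 + m.2.2 ≤ L₁ ∧ m.2.1 + m.2.2 ≤ L₂) ∧
  M.Pairwise (fun m m' =>
      Disjoint (mSegX m) (mSegX m') ∧ Disjoint (mSegY m) (mSegY m')) ∧
  (∀ m ∈ M, ∀ m' ∈ M, ∀ s s' : ℝ, 0 ≤ s → s < m.2.2 → 0 ≤ s' → s' < m'.2.2 →
      m.1 + s < m'.1 + s' → m.2.1 + s ≤ m'.2.1 + s')

/-- Cost of an exp-matching: deletion and insertion integrals over the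
unmatched positions plus the substitution (arc-length) integral over the
segments (the factor `1/√2` cancels the speed `√2` of the parametrization). -/
def mCost [Inhabited α] (wdel wins : α → ℝ) (wsub : α → α → ℝ)
    (p₁ p₂ : List (α × ℝ)) (M : List (ℝ × ℝ × ℝ)) : ℝ :=
  (∫ x in Set.Ico 0 (eLen p₁) \ mEX M, wdel (charAt p₁ x)) +
  (∫ y in Set.Ico 0 (eLen p₂) \ mEY M, wins (charAt p₂ y)) +
  (M.map fun m => ∫ s in (0 : ℝ)..m.2.2,
      wsub (charAt p₁ (m.1 + s)) (charAt p₂ (m.2.1 + s))).sum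

end ExpStr
end

noncomputable section
namespace ExpStr

section Rcat

/-! ### Concatenation, scaling and run-length encoding -/

variable {α : Type*} [DecidableEq α]

lemma isExp_iff (l : List (α × ℝ)) : IsExp l ↔ l.IsChain (fun x y => x.1 ≠ y.1) := Iff.rfl

lemma rcat_nil_left (q : List (α × ℝ)) : rcat [] q = q := by
  cases q <;> simp [rcat, eCat]

lemma rcat_nil_right (p : List (α × ℝ)) : rcat p [] = p := by
  unfold rcat eCat
  cases p.getLast? <;> simp

lemma rcat_single (a b : α) (s t : ℝ) (q : List (α × ℝ)) :
    rcat [(a, s)] ((b, t) :: q) =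
      if a = b then (a, s + t) :: q else (a, s) :: (b, t) :: q := by
  simp [rcat, eCat]

lemma rcat_cons_cons (x y : α × ℝ) (p q : List (α × ℝ)) :
    rcat (x :: y :: p) q = x :: rcat (y :: p) q := by
  unfold rcat eCat
  rw [List.getLast?_cons_cons]
  cases h : (y :: p).getLast? with
  | none => simp
  | some z =>
    cases q with
    | nil => simp
    | cons u q => obtain ⟨a, s⟩ := z; obtain ⟨b, t⟩ := u; simp only; split_ifs <;> simp

lemma rcat_single_assoc (x : α × ℝ) (p q : List (α × ℝ)) :
    rcat [x] (rcat p q) = rcat (rcat [x] p) q := by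
  obtain ⟨a, r⟩ := x
  match p with
  | [] => rw [rcat_nil_left, rcat_nil_right]
  | [(b, t)] =>
    cases q with
    | nil => simp only [rcat_nil_right]
    | cons z q =>
      obtain ⟨c, s⟩ := z
      by_cases hab : a = b <;> by_cases hbc : b = c <;>
        simp_all [rcat_single, rcat_cons_cons, add_assoc]
  | (b, t) :: y :: p =>
    rw [rcat_cons_cons, rcat_single, rcat_single]
    split_ifs <;> simp [rcat_cons_cons]

lemma scaleE_rcat (k : ℝ) (p q : List (α × ℝ)) :
    scaleE k (rcat p q) = rcat (scaleE k p) (scaleE k q) := by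
  match p with
  | [] => simp [rcat_nil_left, scaleE]
  | [(a, s)] =>
    cases q with
    | nil => simp [rcat_nil_right, scaleE]
    | cons z q =>
      obtain ⟨b, t⟩ := z
      simp only [rcat_single, scaleE, List.map_cons, List.map_nil]
      split_ifs <;> simp [mul_add]
  | x :: y :: p =>
    have ih := scaleE_rcat k (y :: p) q
    rw [rcat_cons_cons]
    simp only [scaleE, List.map_cons] at ih ⊢
    rw [rcat_cons_cons, ih]

lemma RES.scaleE {k : ℝ} (hk : 0 < k) {p : List (α × ℝ)} (hp : RES p) :
    RES (scaleE k p) := by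
  refine ⟨?_, ?_⟩
  · have := hp.1
    rw [isExp_iff] at this ⊢
    unfold ExpStr.scaleE
    simpa [List.isChain_map] using this
  · intro x hx
    simp only [ExpStr.scaleE, List.mem_map] at hx
    obtain ⟨y, hy, rfl⟩ := hx
    exact mul_pos hk (hp.2 y hy)

lemma pos_rcat {p q : List (α × ℝ)} (hp : ∀ x ∈ p, 0 < x.2) (hq : ∀ x ∈ q, 0 < x.2) :
    ∀ x ∈ rcat p q, 0 < x.2 := by
  match p with
  | [] => simpa [rcat_nil_left] using hq
  | [(a, s)] =>
    cases q with
    | nil => simpa [rcat_nil_right] using hp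
    | cons z q =>
      obtain ⟨b, t⟩ := z
      have h1 : 0 < s := hp (a, s) (by simp)
      have h2 : 0 < t := hq (b, t) (by simp)
      rw [rcat_single]
      intro x hx
      split_ifs at hx
      · rcases List.mem_cons.1 hx with rfl | hx
        · exact add_pos h1 h2
        · exact hq x (by simp [hx])
      · rcases List.mem_cons.1 hx with rfl | hx
        · exact h1
        · exact hq x hx
  | x :: y :: p =>
    rw [rcat_cons_cons]
    intro z hz
    rcases List.mem_cons.1 hz with rfl | hz
    · exact hp _ (by simp)
    · exact pos_rcat (fun u hu => hp u (List.mem_cons_of_mem _ hu)) hq z hz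

lemma RES.rcat_single {a : α} {s : ℝ} (hs : 0 < s) {q : List (α × ℝ)} (hq : RES q) :
    RES (rcat [(a, s)] q) := by
  refine ⟨?_, pos_rcat (by simpa using hs) hq.2⟩
  cases q with
  | nil => simp [rcat_nil_right, isExp_iff]
  | cons z q =>
    obtain ⟨b, t⟩ := z
    have h := hq.1
    rw [ExpStr.rcat_single]
    rw [isExp_iff] at h ⊢
    split_ifs with hab
    · subst hab
      cases q with
      | nil => simp
      | cons u q => simpa using h
    · simpa [hab] using h

lemma ofWord_cons (a : α) (w : List α) : ofWord (a :: w) = rcat [(a, 1)] (ofWord w) := rfl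

lemma RES_ofWord (w : List α) : RES (ofWord w) := by
  induction w with
  | nil => simp [RES, ofWord, eRep, isExp_iff]
  | cons a w ih => exact ih.rcat_single one_pos

lemma ofWord_append (u v : List α) : ofWord (u ++ v) = rcat (ofWord u) (ofWord v) := by
  induction u with
  | nil => simp [ofWord, eRep, rcat_nil_left]
  | cons a u ih => rw [List.cons_append, ofWord_cons, ih, ofWord_cons, rcat_single_assoc]

end Rcat

section Sequences

/-! ### Edit sequences -/

variable {α : Type*} {wdel wins : α → ℝ} {wsub : α → α → ℝ}

section Exp
variable [DecidableEq α]

lemma Step.scale {k : ℝ} (hk : 0 < k) {u v : List (α × ℝ)} {c : ℝ}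
    (h : Step wdel wins wsub u v c) :
    Step wdel wins wsub (scaleE k u) (scaleE k v) (k * c) := by
  have key (a : α) (q : ℝ) : scaleE k [(a, q)] = [(a, k * q)] := rfl
  obtain ⟨p₁, p₂, hp₁, hp₂, h⟩ := h
  refine ⟨scaleE k p₁, scaleE k p₂, hp₁.scaleE hk, hp₂.scaleE hk, ?_⟩
  rcases h with ⟨a, q, hq, rfl, rfl, rfl⟩ | ⟨a, q, hq, rfl, rfl, rfl⟩ |
    ⟨a, b, q, hq, rfl, rfl, rfl⟩
  · exact Or.inl ⟨a, k * q, mul_pos hk hq, by simp [scaleE_rcat], by simp [scaleE_rcat, key],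
      by ring⟩
  · exact Or.inr (Or.inl ⟨a, k * q, mul_pos hk hq, by simp [scaleE_rcat, key],
      by simp [scaleE_rcat], by ring⟩)
  · exact Or.inr (Or.inr ⟨a, b, k * q, mul_pos hk hq, by simp [scaleE_rcat, key],
      by simp [scaleE_rcat, key], by ring⟩)

lemma EditCost.scale {k : ℝ} (hk : 0 < k) {u v : List (α × ℝ)} {c : ℝ}
    (h : EditCost wdel wins wsub u v c) :
    EditCost wdel wins wsub (scaleE k u) (scaleE k v) (k * c) := by
  induction h with
  | refl => rw [mul_zero]; exact .refl
  | step _ hs ih => rw [mul_add]; exact .step ih (hs.scale hk)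

lemma EditCost.nonneg (hdel : ∀ a, 0 < wdel a) (hins : ∀ a, 0 < wins a)
    (hsub : ∀ a b, 0 ≤ wsub a b) {u v : List (α × ℝ)} {c : ℝ}
    (h : EditCost wdel wins wsub u v c) : 0 ≤ c := by
  induction h with
  | refl => exact le_rfl
  | step _ hs ih =>
    obtain ⟨_, _, _, _, hs⟩ := hs
    refine add_nonneg ih ?_
    rcases hs with ⟨a, q, hq, -, -, rfl⟩ | ⟨a, q, hq, -, -, rfl⟩ | ⟨a, b, q, hq, -, -, rfl⟩
    · exact mul_nonneg hq.le (hins a).le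
    · exact mul_nonneg hq.le (hdel a).le
    · exact mul_nonneg hq.le (hsub a b)

lemma SEditCost.toExp {u v : List α} {c : ℝ} (h : SEditCost wdel wins wsub u v c) :
    EditCost wdel wins wsub (ofWord u) (ofWord v) c := by
  induction h with
  | refl => exact .refl
  | step _ hs ih =>
    refine .step ih ?_
    obtain ⟨p₁, p₂, hs⟩ := hs
    refine ⟨ofWord p₁, ofWord p₂, RES_ofWord _, RES_ofWord _, ?_⟩
    rcases hs with ⟨a, rfl, rfl, rfl⟩ | ⟨a, rfl, rfl, rfl⟩ | ⟨a, b, rfl, rfl, rfl⟩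
    · exact Or.inl ⟨a, 1, one_pos, by simp [ofWord_append], by simp [ofWord_append, ofWord_cons],
        by ring⟩
    · exact Or.inr (Or.inl ⟨a, 1, one_pos, by simp [ofWord_append, ofWord_cons],
        by simp [ofWord_append], by ring⟩)
    · exact Or.inr (Or.inr ⟨a, b, 1, one_pos, by simp [ofWord_append, ofWord_cons],
        by simp [ofWord_append, ofWord_cons], by ring⟩)

end Exp

lemma SEditCost.nonneg (hdel : ∀ a, 0 < wdel a) (hins : ∀ a, 0 < wins a)
    (hsub : ∀ a b, 0 ≤ wsub a b) {u v : List α} {c : ℝ}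
    (h : SEditCost wdel wins wsub u v c) : 0 ≤ c := by
  induction h with
  | refl => exact le_rfl
  | step _ hs ih =>
    obtain ⟨_, _, hs⟩ := hs
    refine add_nonneg ih ?_
    rcases hs with ⟨a, -, -, rfl⟩ | ⟨a, -, -, rfl⟩ | ⟨a, b, -, -, rfl⟩
    · exact (hins a).le
    · exact (hdel a).le
    · exact hsub a b

lemma SEditCost.trans {u v z : List α} {c c' : ℝ} (h : SEditCost wdel wins wsub u v c)
    (h' : SEditCost wdel wins wsub v z c') : SEditCost wdel wins wsub u z (c + c') := by
  induction h' with
  | refl => simpa using h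
  | step _ hs ih => rw [← add_assoc]; exact .step ih hs

lemma SStep.single {u v : List α} {c : ℝ} (h : SStep wdel wins wsub u v c) :
    SEditCost wdel wins wsub u v c := by
  simpa using SEditCost.step .refl h

lemma SEditCost.append_right {u v : List α} {c : ℝ} (h : SEditCost wdel wins wsub u v c)
    (z : List α) : SEditCost wdel wins wsub (u ++ z) (v ++ z) c := by
  induction h with
  | refl => exact .refl
  | step _ hs ih =>
    refine .step ih ?_
    obtain ⟨p₁, p₂, hs⟩ := hs
    refine ⟨p₁, p₂ ++ z, ?_⟩
    rcases hs with ⟨a, rfl, rfl, rfl⟩ | ⟨a, rfl, rfl, rfl⟩ | ⟨a, b, rfl, rfl, rfl⟩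
    · exact Or.inl ⟨a, by simp, by simp, rfl⟩
    · exact Or.inr (Or.inl ⟨a, by simp, by simp, rfl⟩)
    · exact Or.inr (Or.inr ⟨a, b, by simp, by simp, rfl⟩)

lemma SStep.ins_last (u : List α) (a : α) : SStep wdel wins wsub u (u ++ [a]) (wins a) :=
  ⟨u, [], Or.inl ⟨a, by simp, rfl, rfl⟩⟩

lemma SStep.del_last (u : List α) (a : α) : SStep wdel wins wsub (u ++ [a]) u (wdel a) :=
  ⟨u, [], Or.inr (Or.inl ⟨a, rfl, by simp, rfl⟩)⟩

lemma SStep.sub_last (u : List α) (a b : α) :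
    SStep wdel wins wsub (u ++ [a]) (u ++ [b]) (wsub a b) :=
  ⟨u, [], Or.inr (Or.inr ⟨a, b, rfl, rfl, rfl⟩)⟩

/-- Delete all of `u`, then insert all of `v`. -/
lemma SEditCost.exists (wdel wins : α → ℝ) (wsub : α → α → ℝ) (u v : List α) :
    ∃ c, SEditCost wdel wins wsub u v c := by
  induction u using List.reverseRecOn with
  | append_singleton u a ih =>
    obtain ⟨c, hc⟩ := ih
    exact ⟨_, (SStep.del_last u a).single.trans hc⟩
  | nil =>
    induction v using List.reverseRecOn with
    | nil => exact ⟨0, .refl⟩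
    | append_singleton v a ih =>
      obtain ⟨c, hc⟩ := ih
      exact ⟨_, hc.step (SStep.ins_last v a)⟩

lemma sDist_le (hdel : ∀ a, 0 < wdel a) (hins : ∀ a, 0 < wins a)
    (hsub : ∀ a b, 0 ≤ wsub a b) {u v : List α} {c : ℝ}
    (h : SEditCost wdel wins wsub u v c) : sDist wdel wins wsub u v ≤ c :=
  csInf_le ⟨0, fun _ h => SEditCost.nonneg hdel hins hsub h⟩ h

lemma le_sDist {u v : List α} {r : ℝ} (h : ∀ c, SEditCost wdel wins wsub u v c → r ≤ c) :
    r ≤ sDist wdel wins wsub u v :=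
  le_csInf (SEditCost.exists wdel wins wsub u v) h

/-- If every edit sequence from `u` to `v` extends to one from `u'` to `v'` at extra cost `e`, the
distance grows by at most `e`. -/
lemma sDist_le_add (hdel : ∀ a, 0 < wdel a) (hins : ∀ a, 0 < wins a)
    (hsub : ∀ a b, 0 ≤ wsub a b) {u v u' v' : List α} {e : ℝ}
    (h : ∀ c, SEditCost wdel wins wsub u v c → SEditCost wdel wins wsub u' v' (c + e)) :
    sDist wdel wins wsub u' v' ≤ sDist wdel wins wsub u v + e := by
  rw [← sub_le_iff_le_add]
  refine le_sDist fun c hc => ?_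
  rw [sub_le_iff_le_add]
  exact sDist_le hdel hins hsub (h c hc)

end Sequences

section Alignments

/-! ### Continuous alignments of a word with an exponent-string -/

variable {α : Type*}

/-- `Path wdel wins wsub w o q x y c`: an alignment path which moves from position `x` to position
`y` of the word `w` (whose `i`-th letter occupies the interval `[i, i+1]`) while consuming `a^q`, where
`o = some a`, at cost at most `c`. For `o = none` nothing can be consumed and only deletions of
letters of `w` take place. Every move stays inside a single letter of `w`. -/
inductive Path (wdel wins : α → ℝ) (wsub : α → α → ℝ) (w : List α) (o : Option α) :
    ℝ → ℝ → ℝ → ℝ → Prop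
  | refl {x c : ℝ} : 0 ≤ c → Path wdel wins wsub w o 0 x x c
  | del {q x y c : ℝ} (i : ℕ) (b : α) (t : ℝ) : Path wdel wins wsub w o q x y c →
      w[i]? = some b → 0 ≤ t → i ≤ y → y + t ≤ i + 1 →
      Path wdel wins wsub w o q x (y + t) (c + t * wdel b)
  | ins {q x y c : ℝ} (a : α) (t : ℝ) : Path wdel wins wsub w o q x y c →
      o = some a → 0 ≤ t → Path wdel wins wsub w o (q + t) x y (c + t * wins a)
  | sub {q x y c : ℝ} (i : ℕ) (b a : α) (t : ℝ) : Path wdel wins wsub w o q x y c →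
      o = some a → w[i]? = some b → 0 ≤ t → i ≤ y → y + t ≤ i + 1 →
      Path wdel wins wsub w o (q + t) x (y + t) (c + t * wsub b a)

/-- Composition of relations with positions `x`, `y` and additive costs. -/
def comp (R S : ℝ → ℝ → ℝ → Prop) : ℝ → ℝ → ℝ → Prop :=
  fun x z c => ∃ y c₁ c₂, R x y c₁ ∧ S y z c₂ ∧ c₁ + c₂ = c

lemma comp_assoc (R S T : ℝ → ℝ → ℝ → Prop) : comp (comp R S) T = comp R (comp S T) := by
  funext x z c
  apply propext
  constructor
  · rintro ⟨y, _, c₃, ⟨y', c₁, c₂, h₁, h₂, rfl⟩, h₃, rfl⟩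
    exact ⟨y', c₁, c₂ + c₃, h₁, ⟨y, c₂, c₃, h₂, h₃, rfl⟩, by ring⟩
  · rintro ⟨y, c₁, _, h₁, ⟨y', c₂, c₃, h₂, h₃, rfl⟩, rfl⟩
    exact ⟨y', c₁ + c₂, c₃, ⟨y, c₁, c₂, h₁, h₂, rfl⟩, h₃, by ring⟩

/-- `Align wdel wins wsub w v x y c`: an alignment path which consumes the exponent-string `v` and
moves from position `x` to position `y` of `w`, at cost at most `c`. -/
def Align (wdel wins : α → ℝ) (wsub : α → α → ℝ) (w : List α) :
    List (α × ℝ) → ℝ → ℝ → ℝ → Prop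
  | [] => Path wdel wins wsub w none 0
  | z :: l => comp (Path wdel wins wsub w (some z.1) z.2) (Align wdel wins wsub w l)

variable {wdel wins : α → ℝ} {wsub : α → α → ℝ} {w : List α} {o : Option α}

lemma Path.mono {q x y c c' : ℝ} (h : Path wdel wins wsub w o q x y c) (hc : c ≤ c') :
    Path wdel wins wsub w o q x y c' := by
  induction h generalizing c' with
  | refl h0 => exact .refl (h0.trans hc)
  | @del q x y c i b t _ hb ht h1 h2 ih =>
    have := Path.del i b t (ih (c' := c' - t * wdel b) (by linarith)) hb ht h1 h2
    simpa using this
  | @ins q x y c a t _ ha ht ih =>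
    have := Path.ins a t (ih (c' := c' - t * wins a) (by linarith)) ha ht
    simpa using this
  | @sub q x y c i b a t _ ha hb ht h1 h2 ih =>
    have := Path.sub i b a t (ih (c' := c' - t * wsub b a) (by linarith)) ha hb ht h1 h2
    simpa using this

lemma Path.trans {q q' x y z c c' : ℝ} (h : Path wdel wins wsub w o q x y c)
    (h' : Path wdel wins wsub w o q' y z c') :
    Path wdel wins wsub w o (q + q') x z (c + c') := by
  induction h' with
  | refl h0 => rw [add_zero]; exact h.mono (by linarith)
  | del i b t _ hb ht h1 h2 ih => rw [← add_assoc]; exact (ih h).del i b t hb ht h1 h2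
  | ins a t _ ha ht ih => rw [← add_assoc, ← add_assoc]; exact (ih h).ins a t ha ht
  | sub i b a t _ ha hb ht h1 h2 ih =>
    rw [← add_assoc, ← add_assoc]; exact (ih h).sub i b a t ha hb ht h1 h2

lemma Path.of_none {q x y c : ℝ} (h : Path wdel wins wsub w none q x y c) :
    Path wdel wins wsub w o q x y c := by
  induction h with
  | refl h0 => exact .refl h0
  | del i b t _ hb ht h1 h2 ih => exact ih.del i b t hb ht h1 h2
  | ins a t _ ha => cases ha
  | sub i b a t _ ha => cases ha

/-- A path consuming `a^(s+t)` passes through a point where exactly `a^s` has been consumed. -/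
lemma Path.split {q x z c : ℝ} (h : Path wdel wins wsub w o q x z c) {s t : ℝ} (hs : 0 ≤ s)
    (ht : 0 ≤ t) (hq : q = s + t) :
    comp (Path wdel wins wsub w o s) (Path wdel wins wsub w o t) x z c := by
  induction h generalizing s t with
  | @refl x c h0 =>
    obtain rfl : s = 0 := by linarith
    obtain rfl : t = 0 := by linarith
    exact ⟨x, c, 0, .refl h0, .refl le_rfl, by ring⟩
  | @del q x y c i b τ _ hb hτ h1 h2 ih =>
    obtain ⟨m, c₁, c₂, p₁, p₂, rfl⟩ := ih hs ht hq
    exact ⟨m, c₁, _, p₁, p₂.del i b τ hb hτ h1 h2, by ring⟩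
  | @ins q x y c a τ p ha hτ ih =>
    rcases le_total τ t with hle | hle
    · obtain ⟨m, c₁, c₂, p₁, p₂, rfl⟩ := ih (t := t - τ) hs (by linarith) (by linarith)
      refine ⟨m, c₁, _, p₁, ?_, (add_assoc c₁ c₂ _).symm⟩
      simpa using p₂.ins a τ ha hτ
    · have p₁ := p.ins a (τ - t) ha (by linarith)
      have p₂ := (Path.refl (wdel := wdel) (wins := wins) (wsub := wsub) (w := w) (o := o)
        (x := y) le_rfl).ins a t ha ht
      rw [show q + (τ - t) = s by linarith] at p₁
      rw [zero_add] at p₂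
      exact ⟨y, _, _, p₁, p₂, by ring⟩
  | @sub q x y c i b a τ p ha hb hτ h1 h2 ih =>
    rcases le_total τ t with hle | hle
    · obtain ⟨m, c₁, c₂, p₁, p₂, rfl⟩ := ih (t := t - τ) hs (by linarith) (by linarith)
      refine ⟨m, c₁, _, p₁, ?_, (add_assoc c₁ c₂ _).symm⟩
      simpa using p₂.sub i b a τ ha hb hτ h1 h2
    · have p₁ := p.sub i b a (τ - t) ha hb (by linarith) h1 (by linarith)
      have p₂ := (Path.refl (wdel := wdel) (wins := wins) (wsub := wsub) (w := w) (o := o)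
        (x := y + (τ - t)) le_rfl).sub i b a t ha hb ht (by linarith) (by linarith)
      rw [show q + (τ - t) = s by linarith] at p₁
      rw [zero_add, show y + (τ - t) + t = y + τ by ring] at p₂
      exact ⟨_, _, _, p₁, p₂, by ring⟩

lemma path_add {s t : ℝ} (hs : 0 ≤ s) (ht : 0 ≤ t) :
    Path wdel wins wsub w o (s + t) =
      comp (Path wdel wins wsub w o s) (Path wdel wins wsub w o t) := by
  funext x z c
  apply propext
  constructor
  · exact fun h => h.split hs ht rfl
  · rintro ⟨y, c₁, c₂, h₁, h₂, rfl⟩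
    exact h₁.trans h₂

lemma none_comp_path {q : ℝ} :
    comp (Path wdel wins wsub w none 0) (Path wdel wins wsub w o q) =
      Path wdel wins wsub w o q := by
  funext x z c
  apply propext
  constructor
  · rintro ⟨y, c₁, c₂, h₁, h₂, rfl⟩
    simpa using h₁.of_none.trans h₂
  · exact fun h => ⟨x, 0, c, .refl le_rfl, h, by ring⟩

lemma align_append (p q : List (α × ℝ)) :
    Align wdel wins wsub w (p ++ q) =
      comp (Align wdel wins wsub w p) (Align wdel wins wsub w q) := by
  induction p with
  | nil =>
    cases q with
    | nil => exact none_comp_path.symm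
    | cons z q => simp only [Align, List.nil_append, ← comp_assoc, none_comp_path]
  | cons z p ih => simp only [Align, List.cons_append, ih, comp_assoc]

/-- Merging the boundary terms of a concatenation does not affect alignments. -/
lemma align_rcat [DecidableEq α] {p q : List (α × ℝ)} (hp : ∀ x ∈ p, 0 < x.2)
    (hq : ∀ x ∈ q, 0 < x.2) :
    Align wdel wins wsub w (rcat p q) = Align wdel wins wsub w (p ++ q) := by
  match p with
  | [] => rw [rcat_nil_left, List.nil_append]
  | [(a, s)] =>
    cases q with
    | nil => rw [rcat_nil_right, List.append_nil]
    | cons z q =>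
      obtain ⟨b, t⟩ := z
      have h1 : 0 < s := hp (a, s) (by simp)
      have h2 : 0 < t := hq (b, t) (by simp)
      rw [rcat_single]
      split_ifs with hab
      · subst hab
        simp only [Align, List.cons_append, List.nil_append, path_add h1.le h2.le, comp_assoc]
      · rfl
  | x :: y :: p =>
    have ih := align_rcat (p := y :: p) (fun u hu => hp u (List.mem_cons_of_mem _ hu)) hq
    rw [rcat_cons_cons, Align, ih]
    rfl

lemma align_rcat₃ [DecidableEq α] {p q : List (α × ℝ)} (hp : ∀ x ∈ p, 0 < x.2)
    (hq : ∀ x ∈ q, 0 < x.2) {a : α} {s : ℝ} (hs : 0 < s) :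
    Align wdel wins wsub w (rcat p (rcat [(a, s)] q)) =
      comp (Align wdel wins wsub w p)
        (comp (Path wdel wins wsub w (some a) s) (Align wdel wins wsub w q)) := by
  have ha : ∀ x ∈ [(a, s)], 0 < x.2 := by simpa using hs
  rw [align_rcat hp (pos_rcat ha hq), align_append, align_rcat ha hq]
  rfl

lemma align_ofWord [DecidableEq α] (v : List α) :
    Align wdel wins wsub w (ofWord v) = Align wdel wins wsub w (v.map fun a => (a, (1 : ℝ))) := by
  induction v with
  | nil => rfl
  | cons a v ih =>
    rw [ofWord_cons, align_rcat (by simp) (RES_ofWord v).2, List.map_cons]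
    simp only [Align, List.cons_append, List.nil_append, ih]

/-- Replacing the consumed `a^q` by `b^q` costs at most `q * wsub a b`. -/
lemma Path.subst (htri₁ : ∀ a b c, wsub a c ≤ wsub a b + wsub b c)
    (htri₃ : ∀ a b, wins b ≤ wins a + wsub a b) {a : α} (b : α) {q x y c : ℝ}
    (h : Path wdel wins wsub w (some a) q x y c) :
    Path wdel wins wsub w (some b) q x y (c + q * wsub a b) := by
  induction h with
  | refl h0 => exact .refl (by linarith)
  | @del q x y c i d t _ hb ht h1 h2 ih => exact (ih.del i d t hb ht h1 h2).mono (by linarith)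
  | @ins q x y c a' t _ ha ht ih =>
    cases ha
    have := mul_le_mul_of_nonneg_left (htri₃ a b) ht
    exact (ih.ins b t rfl ht).mono (by linarith)
  | @sub q x y c i d a' t _ ha hb ht h1 h2 ih =>
    cases ha
    have := mul_le_mul_of_nonneg_left (htri₁ d a b) ht
    exact (ih.sub i d b t rfl hb ht h1 h2).mono (by linarith)

/-- Dropping the consumed `a^q` costs at most `q * wdel a`. -/
lemma Path.drop (hdel : ∀ a, 0 < wdel a) (hins : ∀ a, 0 < wins a)
    (htri₄ : ∀ a b, wdel a ≤ wsub a b + wdel b) {a : α} {q x y c : ℝ}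
    (h : Path wdel wins wsub w (some a) q x y c) :
    Path wdel wins wsub w none 0 x y (c + q * wdel a) := by
  induction h with
  | refl h0 => exact .refl (by linarith)
  | @del q x y c i d t _ hb ht h1 h2 ih => exact (ih.del i d t hb ht h1 h2).mono (by linarith)
  | @ins q x y c a' t _ ha ht ih =>
    cases ha
    have h1 := mul_nonneg ht (hins a).le
    have h2 := mul_nonneg ht (hdel a).le
    exact ih.mono (by linarith)
  | @sub q x y c i d a' t _ ha hb ht h1 h2 ih =>
    cases ha
    have := mul_le_mul_of_nonneg_left (htri₄ d a) ht
    exact (ih.del i d t hb ht h1 h2).mono (by linarith)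

lemma none_comp_align (q : List (α × ℝ)) :
    comp (Path wdel wins wsub w none 0) (Align wdel wins wsub w q) =
      Align wdel wins wsub w q :=
  (align_append [] q).symm

lemma Align.step [DecidableEq α] (hdel : ∀ a, 0 < wdel a) (hins : ∀ a, 0 < wins a)
    (htri₁ : ∀ a b c, wsub a c ≤ wsub a b + wsub b c)
    (htri₃ : ∀ a b, wins b ≤ wins a + wsub a b)
    (htri₄ : ∀ a b, wdel a ≤ wsub a b + wdel b)
    {u v : List (α × ℝ)} {x z c c' : ℝ} (h : Align wdel wins wsub w u x z c)
    (hs : Step wdel wins wsub u v c') : Align wdel wins wsub w v x z (c + c') := by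
  obtain ⟨p₁, p₂, hp₁, hp₂, hs⟩ := hs
  rcases hs with ⟨a, q, hq, rfl, rfl, rfl⟩ | ⟨a, q, hq, rfl, rfl, rfl⟩ |
    ⟨a, b, q, hq, rfl, rfl, rfl⟩
  · rw [align_rcat hp₁.2 hp₂.2, align_append] at h
    rw [align_rcat₃ hp₁.2 hp₂.2 hq]
    obtain ⟨y, c₁, c₂, h₁, h₂, rfl⟩ := h
    refine ⟨y, c₁, q * wins a + c₂, h₁, ⟨y, _, c₂, ?_, h₂, rfl⟩, by ring⟩
    simpa using (Path.refl (le_refl (0 : ℝ))).ins a q rfl hq.le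
  · rw [align_rcat₃ hp₁.2 hp₂.2 hq] at h
    rw [align_rcat hp₁.2 hp₂.2, align_append, ← none_comp_align p₂]
    obtain ⟨y, c₁, _, h₁, ⟨y', c₂, c₃, h₂, h₃, rfl⟩, rfl⟩ := h
    exact ⟨y, c₁, _, h₁, ⟨y', _, c₃, h₂.drop hdel hins htri₄, h₃, rfl⟩, by ring⟩
  · rw [align_rcat₃ hp₁.2 hp₂.2 hq] at h
    rw [align_rcat₃ hp₁.2 hp₂.2 hq]
    obtain ⟨y, c₁, _, h₁, ⟨y', c₂, c₃, h₂, h₃, rfl⟩, rfl⟩ := h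
    exact ⟨y, c₁, _, h₁, ⟨y', _, c₃, h₂.subst htri₁ htri₃ b, h₃, rfl⟩, by ring⟩

/-- The diagonal path aligns a suffix of `w` with itself at cost `0`. -/
lemma align_self (hsub0 : ∀ a, wsub a a = 0) (pre suf : List α) (hw : w = pre ++ suf) :
    Align wdel wins wsub w (suf.map fun a => (a, (1 : ℝ))) pre.length w.length 0 := by
  induction suf generalizing pre with
  | nil =>
    subst hw
    simp only [List.append_nil]
    exact Path.refl le_rfl
  | cons a suf ih =>
    refine ⟨pre.length + 1, 0, 0, ?_, ?_, by ring⟩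
    · have h := (Path.refl (wdel := wdel) (wins := wins) (wsub := wsub) (w := w) (o := some a)
        (x := (pre.length : ℝ)) le_rfl).sub pre.length a a 1 rfl (by simp [hw]) zero_le_one
        le_rfl le_rfl
      simpa [hsub0] using h
    · simpa using ih (pre ++ [a]) (by simp [hw])

lemma EditCost.align [DecidableEq α] (hdel : ∀ a, 0 < wdel a) (hins : ∀ a, 0 < wins a)
    (hsub0 : ∀ a, wsub a a = 0)
    (htri₁ : ∀ a b c, wsub a c ≤ wsub a b + wsub b c)
    (htri₃ : ∀ a b, wins b ≤ wins a + wsub a b)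
    (htri₄ : ∀ a b, wdel a ≤ wsub a b + wdel b)
    {v : List (α × ℝ)} {c : ℝ} (h : EditCost wdel wins wsub (ofWord w) v c) :
    Align wdel wins wsub w v 0 w.length c := by
  induction h with
  | refl =>
    rw [align_ofWord]
    simpa using align_self hsub0 [] w rfl
  | step _ hs ih => exact ih.step hdel hins htri₁ htri₃ htri₄ hs

end Alignments

section Potential

/-! ### The piecewise linear potential -/

/-- The function on the unit square with values `g₀₀, g₁₀, g₀₁, g₁₁` at the corners
`(0,0), (1,0), (0,1), (1,1)`, linear on each of the two triangles cut out by the main diagonal. -/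
def cell (g₀₀ g₁₀ g₀₁ g₁₁ r s : ℝ) : ℝ :=
  if s ≤ r then g₀₀ + r * (g₁₀ - g₀₀) + s * (g₁₁ - g₁₀)
  else g₀₀ + s * (g₀₁ - g₀₀) + r * (g₁₁ - g₀₁)

/-- The piecewise linear function on the strip `[0,∞) × [0,1]` with values `g₀ i` at `(i, 0)` and
`g₁ i` at `(i, 1)`. -/
def interp (g₀ g₁ : ℕ → ℝ) (x s : ℝ) : ℝ :=
  cell (g₀ ⌊x⌋₊) (g₀ (⌊x⌋₊ + 1)) (g₁ ⌊x⌋₊) (g₁ (⌊x⌋₊ + 1)) (x - ⌊x⌋₊) s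

lemma cell_del {g₀₀ g₁₀ g₀₁ g₁₁ r s t e : ℝ} (ht : 0 ≤ t) (h0 : g₁₀ ≤ g₀₀ + e)
    (h1 : g₁₁ ≤ g₀₁ + e) :
    cell g₀₀ g₁₀ g₀₁ g₁₁ (r + t) s ≤ cell g₀₀ g₁₀ g₀₁ g₁₁ r s + t * e := by
  unfold cell
  split_ifs with ha hb hb
  · nlinarith
  · nlinarith [mul_nonneg (sub_nonneg.2 ha) (sub_nonneg.2 h0),
      mul_nonneg (sub_nonneg.2 (not_le.1 hb).le) (sub_nonneg.2 h1)]
  · linarith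
  · nlinarith

lemma cell_ins {g₀₀ g₁₀ g₀₁ g₁₁ r s t e : ℝ} (ht : 0 ≤ t) (h0 : g₀₁ ≤ g₀₀ + e)
    (h1 : g₁₁ ≤ g₁₀ + e) :
    cell g₀₀ g₁₀ g₀₁ g₁₁ r (s + t) ≤ cell g₀₀ g₁₀ g₀₁ g₁₁ r s + t * e := by
  unfold cell
  split_ifs with ha hb hb
  · nlinarith
  · linarith
  · nlinarith [mul_nonneg (sub_nonneg.2 hb) (sub_nonneg.2 h1),
      mul_nonneg (sub_nonneg.2 (not_le.1 ha).le) (sub_nonneg.2 h0)]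
  · nlinarith

lemma cell_sub {g₀₀ g₁₀ g₀₁ g₁₁ r s t e : ℝ} (ht : 0 ≤ t) (h : g₁₁ ≤ g₀₀ + e) :
    cell g₀₀ g₁₀ g₀₁ g₁₁ (r + t) (s + t) ≤ cell g₀₀ g₁₀ g₀₁ g₁₁ r s + t * e := by
  unfold cell
  split_ifs with ha hb hb
  · nlinarith
  · linarith
  · linarith
  · nlinarith

/-- On a closed cell `[i, i+1] × [0,1]` the strip function is the cell function, also on the right
edge, where the floor of `x` is `i + 1`. -/
lemma interp_eq (g₀ g₁ : ℕ → ℝ) {x s : ℝ} (i : ℕ) (hi : i ≤ x) (hi' : x ≤ i + 1) (hs : 0 ≤ s)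
    (hs' : s ≤ 1) :
    interp g₀ g₁ x s = cell (g₀ i) (g₀ (i + 1)) (g₁ i) (g₁ (i + 1)) (x - i) s := by
  rcases hi'.lt_or_eq with h | rfl
  · have : ⌊x⌋₊ = i := (Nat.floor_eq_iff (i.cast_nonneg.trans hi)).2 ⟨hi, h⟩
    simp only [interp, this]
  · have : ⌊(i : ℝ) + 1⌋₊ = i + 1 := by exact_mod_cast Nat.floor_natCast (R := ℝ) (i + 1)
    simp only [interp, this, cell]
    push_cast
    simp only [sub_self, add_sub_cancel_left, if_pos hs']
    split_ifs with h
    · obtain rfl : s = 0 := le_antisymm h hs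
      ring
    · ring

lemma interp_natCast (g₀ g₁ : ℕ → ℝ) (i : ℕ) : interp g₀ g₁ i 0 = g₀ i := by
  simp [interp, cell]

/-- Adjacent strips agree on their common edge. -/
lemma interp_one (g₀ g₁ g₂ : ℕ → ℝ) {x : ℝ} (hx : 0 ≤ x) :
    interp g₀ g₁ x 1 = interp g₁ g₂ x 0 := by
  have h1 := Nat.floor_le hx
  have h2 := Nat.lt_floor_add_one x
  rw [interp, interp, cell, cell, if_neg (by linarith), if_pos (by linarith)]
  ring

variable {α : Type*} {wdel wins : α → ℝ} {wsub : α → α → ℝ} {w : List α} {o : Option α}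

lemma Path.le {q x y c : ℝ} (h : Path wdel wins wsub w o q x y c) : x ≤ y := by
  induction h <;> linarith

lemma Path.q_nonneg {q x y c : ℝ} (h : Path wdel wins wsub w o q x y c) : 0 ≤ q := by
  induction h <;> linarith

/-- The potential grows along an alignment path by at most the cost of the path. -/
lemma Path.interp_le {g₀ g₁ : ℕ → ℝ}
    (hd₀ : ∀ i b, w[i]? = some b → g₀ (i + 1) ≤ g₀ i + wdel b)
    (hd₁ : ∀ i b, w[i]? = some b → g₁ (i + 1) ≤ g₁ i + wdel b)
    (hi : ∀ a, o = some a → ∀ i, g₁ i ≤ g₀ i + wins a)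
    (hs : ∀ a, o = some a → ∀ i b, w[i]? = some b → g₁ (i + 1) ≤ g₀ i + wsub b a)
    {q x y c : ℝ} (h : Path wdel wins wsub w o q x y c) (hx : 0 ≤ x) (hq : q ≤ 1) :
    interp g₀ g₁ y q ≤ interp g₀ g₁ x 0 + c := by
  induction h with
  | refl h0 => linarith
  | @del q x y c i b t p hb ht h1 h2 ih =>
    have hq0 := p.q_nonneg
    have key := cell_del (r := y - i) (s := q) ht (hd₀ i b hb) (hd₁ i b hb)
    have ih := ih hx hq
    rw [interp_eq g₀ g₁ i h1 (by linarith) hq0 hq] at ih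
    rw [interp_eq g₀ g₁ i (by linarith) h2 hq0 hq, show y + t - i = y - i + t by ring]
    linarith
  | @ins q x y c a t p ha ht ih =>
    have hq0 := p.q_nonneg
    have hy : 0 ≤ y := hx.trans p.le
    have key := cell_ins (r := y - ⌊y⌋₊) (s := q) ht (hi a ha ⌊y⌋₊) (hi a ha (⌊y⌋₊ + 1))
    have ih := ih hx (by linarith)
    rw [interp] at ih ⊢
    linarith
  | @sub q x y c i b a t p ha hb ht h1 h2 ih =>
    have hq0 := p.q_nonneg
    have key := cell_sub (g₁₀ := g₀ (i + 1)) (g₀₁ := g₁ i) (r := y - i) (s := q) ht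
      (hs a ha i b hb)
    have ih := ih hx (by linarith)
    rw [interp_eq g₀ g₁ i h1 (by linarith) hq0 (by linarith)] at ih
    rw [interp_eq g₀ g₁ i (by linarith) h2 (by linarith) hq,
      show y + t - i = y - i + t by ring]
    linarith

/-- The potential at the integer points: distances from the prefixes of `w` to `v`. -/
def pref (wdel wins : α → ℝ) (wsub : α → α → ℝ) (w v : List α) (i : ℕ) : ℝ :=
  sDist wdel wins wsub (w.take i) v

lemma take_succ_of_getElem? {i : ℕ} {b : α} (h : w[i]? = some b) :
    w.take (i + 1) = w.take i ++ [b] := by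
  rw [List.take_add_one, h]; rfl

lemma pref_del (hdel : ∀ a, 0 < wdel a) (hins : ∀ a, 0 < wins a)
    (hsub : ∀ a b, 0 ≤ wsub a b) (v : List α) (i : ℕ) (b : α) (h : w[i]? = some b) :
    pref wdel wins wsub w v (i + 1) ≤ pref wdel wins wsub w v i + wdel b := by
  unfold pref
  rw [take_succ_of_getElem? h]
  refine sDist_le_add hdel hins hsub fun c hc => ?_
  rw [add_comm]
  exact (SStep.del_last _ b).single.trans hc

lemma pref_ins (hdel : ∀ a, 0 < wdel a) (hins : ∀ a, 0 < wins a)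
    (hsub : ∀ a b, 0 ≤ wsub a b) (v : List α) (a : α) (i : ℕ) :
    pref wdel wins wsub w (v ++ [a]) i ≤ pref wdel wins wsub w v i + wins a :=
  sDist_le_add hdel hins hsub fun _ hc => hc.step (SStep.ins_last v a)

lemma pref_sub (hdel : ∀ a, 0 < wdel a) (hins : ∀ a, 0 < wins a)
    (hsub : ∀ a b, 0 ≤ wsub a b) (v : List α) (a : α) (i : ℕ) (b : α) (h : w[i]? = some b) :
    pref wdel wins wsub w (v ++ [a]) (i + 1) ≤ pref wdel wins wsub w v i + wsub b a := by
  unfold pref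
  rw [take_succ_of_getElem? h]
  exact sDist_le_add hdel hins hsub fun _ hc => (hc.append_right [b]).step (SStep.sub_last v b a)

lemma Align.interp_le (hdel : ∀ a, 0 < wdel a) (hins : ∀ a, 0 < wins a)
    (hsub : ∀ a b, 0 ≤ wsub a b) (pre suf : List α) {x y c : ℝ} (hx : 0 ≤ x)
    (h : Align wdel wins wsub w (suf.map fun a => (a, (1 : ℝ))) x y c) :
    interp (pref wdel wins wsub w (pre ++ suf)) (pref wdel wins wsub w (pre ++ suf)) y 0 ≤
      interp (pref wdel wins wsub w pre) (pref wdel wins wsub w pre) x 0 + c := by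
  induction suf generalizing pre x c with
  | nil =>
    rw [List.append_nil]
    exact Path.interp_le (pref_del hdel hins hsub pre) (pref_del hdel hins hsub pre)
      (by simp) (by simp) h hx zero_le_one
  | cons a suf ih =>
    obtain ⟨m, c₁, c₂, h₁, h₂, rfl⟩ := h
    have hm : 0 ≤ m := hx.trans h₁.le
    have e₂ := ih (pre ++ [a]) hm h₂
    have e₁ := Path.interp_le (g₀ := pref wdel wins wsub w pre)
      (g₁ := pref wdel wins wsub w (pre ++ [a])) (pref_del hdel hins hsub pre)
      (pref_del hdel hins hsub _) (by rintro _ ⟨⟩ i; exact pref_ins hdel hins hsub pre a i)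
      (by rintro _ ⟨⟩ i b hb; exact pref_sub hdel hins hsub pre a i b hb) h₁ hx le_rfl
    rw [interp_one _ _ (pref wdel wins wsub w (pre ++ [a])) hm] at e₁
    -- at height `0` the upper row of a strip is irrelevant
    have e₀ : interp (pref wdel wins wsub w pre) (pref wdel wins wsub w (pre ++ [a])) x 0 =
        interp (pref wdel wins wsub w pre) (pref wdel wins wsub w pre) x 0 := by
      have := Nat.floor_le hx
      rw [interp, interp, cell, cell, if_pos (by linarith), if_pos (by linarith)]
      ring
    rw [List.append_assoc, List.singleton_append] at e₂
    linarith

lemma Align.sDist_le (hdel : ∀ a, 0 < wdel a) (hins : ∀ a, 0 < wins a)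
    (hsub : ∀ a b, 0 ≤ wsub a b) [DecidableEq α] {v : List α} {c : ℝ}
    (h : Align wdel wins wsub w (ofWord v) 0 w.length c) :
    sDist wdel wins wsub w v ≤ c := by
  rw [align_ofWord] at h
  have := Align.interp_le hdel hins hsub [] v le_rfl h
  have h0 := interp_natCast (pref wdel wins wsub w []) (pref wdel wins wsub w []) 0
  rw [Nat.cast_zero] at h0
  rw [interp_natCast, h0] at this
  have hz : sDist wdel wins wsub ([] : List α) [] ≤ 0 :=
    ExpStr.sDist_le hdel hins hsub .refl
  simp only [pref, List.take_length, List.take_zero, List.nil_append] at this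
  linarith

end Potential

end ExpStr
end

open ExpStr in
/-- Correctness of the algorithm: if `p₁, p₂` are `ℚ⁺`-exponent-strings whose
exponents have common denominator `C` (so that multiplying every exponent by
`C` yields the run-length encodings of the ordinary strings `w₁, w₂`), then
`dist(p₁, p₂) = d / C` where `d` is the string edit distance from `w₁` to
`w₂`. -/
theorem algorithm_correct {α : Type*} [DecidableEq α]
    (wdel wins : α → ℝ) (wsub : α → α → ℝ)
    (hdel : ∀ a, 0 < wdel a) (hins : ∀ a, 0 < wins a)
    (hsub0 : ∀ a, wsub a a = 0) (hsubpos : ∀ a b, a ≠ b → 0 < wsub a b)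
    (htri₁ : ∀ a b c, wsub a c ≤ wsub a b + wsub b c)
    (htri₂ : ∀ a b, wsub a b ≤ wdel a + wins b)
    (htri₃ : ∀ a b, wins b ≤ wins a + wsub a b)
    (htri₄ : ∀ a b, wdel a ≤ wsub a b + wdel b)
    (C : ℕ) (hC : 0 < C)
    (p₁ p₂ : List (α × ℝ)) (h₁ : RES p₁) (h₂ : RES p₂)
    (hq₁ : RatExp p₁) (hq₂ : RatExp p₂)
    (w₁ w₂ : List α)
    (hw₁ : ofWord w₁ = scaleE (C : ℝ) p₁)
    (hw₂ : ofWord w₂ = scaleE (C : ℝ) p₂) :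
    eDist wdel wins wsub p₁ p₂ = sDist wdel wins wsub w₁ w₂ / C := by
  have hsub : ∀ a b, 0 ≤ wsub a b := by
    intro a b
    by_cases h : a = b
    · subst h; exact (hsub0 a).ge
    · exact (hsubpos a b h).le
  have hC' : (0 : ℝ) < C := by exact_mod_cast hC
  have unscale : ∀ p : List (α × ℝ), scaleE (C : ℝ)⁻¹ (scaleE (C : ℝ) p) = p := by
    intro p
    simp [scaleE, Function.comp_def, inv_mul_cancel_left₀ hC'.ne']
  have toExp : ∀ c, SEditCost wdel wins wsub w₁ w₂ c →
      EditCost wdel wins wsub p₁ p₂ ((C : ℝ)⁻¹ * c) := by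
    intro c hc
    have := hc.toExp.scale (inv_pos.2 hC')
    rwa [hw₁, hw₂, unscale, unscale] at this
  apply le_antisymm
  · rw [le_div_iff₀ hC']
    refine le_sDist fun c hc => ?_
    have hle : eDist wdel wins wsub p₁ p₂ ≤ (C : ℝ)⁻¹ * c :=
      csInf_le ⟨0, fun _ h => EditCost.nonneg hdel hins hsub h⟩ (toExp c hc)
    rwa [inv_mul_eq_div, le_div_iff₀ hC'] at hle
  · obtain ⟨c₀, hc₀⟩ := SEditCost.exists wdel wins wsub w₁ w₂
    refine le_csInf ⟨_, toExp c₀ hc₀⟩ fun c hc => ?_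
    have hc' := EditCost.scale hC' hc
    rw [← hw₁, ← hw₂] at hc'
    rw [div_le_iff₀ hC', mul_comm]
    exact (hc'.align hdel hins hsub0 htri₁ htri₃ htri₄).sDist_le hdel hins hsub
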